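/- For any sequence D = (D_n)_{n=1}^∞ of nonempty open subsets of [0,1] forming a base for the topology of [0,1], the space X_D = (C[0,1], ‖·‖_D) is locally octahedral: for every ε > 0 and every x in the unit sphere of X_D there exists y in the unit sphere with ‖x + y‖_D > 2 − ε and ‖x − y‖_D > 2 − ε. -/

import Mathlib

open Set Filter Topology

/-- The `n`-th seminorm: `‖x‖ₙ = sup_{d ∈ Dₙ} |x d|`. -/
noncomputable def seminormD (D : ℕ → Set (Icc (0:ℝ) 1)) (n : ℕ)
    (x : C(Icc (0:ℝ) 1, ℝ)) : ℝ :=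
  ⨆ d : D n, |x d|

/-- The norm `‖x‖_D = (Σₙ 2⁻ⁿ ‖x‖ₙ²)^{1/2}` (indexing the sequence from `0`,
with weight `2^{-(n+1)}`). -/
noncomputable def normD (D : ℕ → Set (Icc (0:ℝ) 1)) (x : C(Icc (0:ℝ) 1, ℝ)) : ℝ :=
  Real.sqrt (∑' n : ℕ, (1 / 2 : ℝ) ^ (n + 1) * (seminormD D n x) ^ 2)

/-!
Fix `ρ` less than the norm of `x`. Finitely many of the sets `D i` carry most of the norm of `x`.
On each of them `‖x‖` nearly attains its supremum at infinitely many points, because there are no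
isolated points. So there are disjoint finite sets `P` and `Q`, both containing such a point of each
of these `D i`. Multiply `x` by a function with values in `[-1, 1]` that is `1` on `P` and
`-1` on `Q`, to get `y`. The function `a • x + b • y` equals `(a + b) • x` on `P` and
`(a - b) • x` on `Q`, and `max |a + b| |a - b| = |a| + |b|`, so its norm is at least
`(|a| + |b|) * ρ`. Normalizing `y` only enlarges the coefficient `b`, since `y` is dominated by `x`.
-/

lemma abs_add_abs_eq_abs_add_or_abs_sub {α : Type*} [AddCommGroup α] [LinearOrder α]
    [IsOrderedAddMonoid α] (a b : α) : |a| + |b| = |a + b| ∨ |a| + |b| = |a - b| := by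
  grind

lemma exists_finite_disjoint_inter_nonempty {κ α : Type*} [Finite κ] {U : κ → Set α}
    (hU : ∀ k, (U k).Infinite) :
    ∃ P Q : Set α, P.Finite ∧ Q.Finite ∧ Disjoint P Q ∧
      ∀ k, (U k ∩ P).Nonempty ∧ (U k ∩ Q).Nonempty := by
  choose p hp using fun k ↦ (hU k).nonempty
  choose q hqU hqP using fun k ↦ ((hU k).sdiff (finite_range p)).nonempty
  exact ⟨range p, range q, finite_range p, finite_range q,
    disjoint_right.2 (forall_mem_range.2 hqP),
    fun k ↦ ⟨⟨p k, hp k, mem_range_self k⟩, ⟨q k, hqU k, mem_range_self k⟩⟩⟩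

variable {ι K E : Type*} [TopologicalSpace K]

section SupNormOn

variable [SeminormedAddCommGroup E] {s : Set K} {x y : C(K, E)}

/-- The supremum over `s` of the pointwise norm of `x`, the analogue of `seminormD` for one set
and vector-valued functions. It takes the junk value `0` if `s` is empty. -/
noncomputable def supNormOn (s : Set K) (x : C(K, E)) : ℝ :=
  ⨆ p : s, ‖x p‖

lemma supNormOn_nonneg (s : Set K) (x : C(K, E)) : 0 ≤ supNormOn s x :=
  Real.iSup_nonneg fun _ ↦ norm_nonneg _

lemma supNormOn_smul [NormedSpace ℝ E] (s : Set K) (c : ℝ) (x : C(K, E)) :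
    supNormOn s (c • x) = |c| * supNormOn s x := by
  simp only [supNormOn, Real.mul_iSup_of_nonneg (abs_nonneg c), ContinuousMap.smul_apply,
    norm_smul, Real.norm_eq_abs]

lemma infinite_setOf_mul_supNormOn_le_norm [T1Space K] [PerfectSpace K] (hs : IsOpen s)
    (hne : s.Nonempty) (x : C(K, E)) {r : ℝ} (hr : r < 1) :
    {p ∈ s | r * supNormOn s x ≤ ‖x p‖}.Infinite := by
  rcases (supNormOn_nonneg s x).eq_or_lt with hzero | hpos
  · obtain ⟨p, hp⟩ := hne
    refine (infinite_of_mem_nhds p (hs.mem_nhds hp)).mono fun q hq ↦ ⟨hq, ?_⟩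
    simp [← hzero]
  · have : Nonempty s := hne.to_subtype
    obtain ⟨p, hp⟩ : ∃ p : s, r * supNormOn s x < ‖x p‖ :=
      exists_lt_of_lt_ciSup (mul_lt_of_lt_one_left hpos hr)
    have hopen : IsOpen {q | r * supNormOn s x < ‖x q‖} :=
      isOpen_lt continuous_const (by fun_prop)
    exact (infinite_of_mem_nhds p.1 ((hs.inter hopen).mem_nhds ⟨p.2, hp⟩)).mono
      fun q hq ↦ ⟨hq.1, hq.2.le⟩

variable [CompactSpace K]

lemma supNormOn_le_norm (s : Set K) (x : C(K, E)) : supNormOn s x ≤ ‖x‖ :=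
  Real.iSup_le (fun p ↦ x.norm_coe_le_norm p) (norm_nonneg x)

lemma norm_le_supNormOn (x : C(K, E)) {p : K} (hp : p ∈ s) : ‖x p‖ ≤ supNormOn s x :=
  le_ciSup (f := fun q : s ↦ ‖x q‖) ⟨‖x‖, forall_mem_range.2 fun q ↦ x.norm_coe_le_norm q⟩ ⟨p, hp⟩

lemma supNormOn_mono (h : ∀ p ∈ s, ‖x p‖ ≤ ‖y p‖) : supNormOn s x ≤ supNormOn s y :=
  Real.iSup_le (fun p ↦ (h p p.2).trans (norm_le_supNormOn y p.2)) (supNormOn_nonneg s y)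

end SupNormOn

section WeightedSupNorm

variable [SeminormedAddCommGroup E] {w : ι → ℝ} {x y : C(K, E)}

/-- The weighted `ℓ²` combination of the seminorms `supNormOn (D i)`, which generalizes `normD` to
arbitrary weights and index types. It is meaningful for nonnegative summable weights. -/
noncomputable def weightedSupNorm (w : ι → ℝ) (D : ι → Set K) (x : C(K, E)) : ℝ :=
  √(∑' i, w i * supNormOn (D i) x ^ 2)

lemma weightedSupNorm_smul [NormedSpace ℝ E] (w : ι → ℝ) (D : ι → Set K) (c : ℝ) (x : C(K, E)) :
    weightedSupNorm w D (c • x) = |c| * weightedSupNorm w D x := by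
  simp only [weightedSupNorm, supNormOn_smul, mul_pow, mul_left_comm _ (|c| ^ 2), tsum_mul_left]
  rw [Real.sqrt_mul (sq_nonneg _), Real.sqrt_sq (abs_nonneg c)]

variable [CompactSpace K]

lemma summable_mul_supNormOn_sq (hw : ∀ i, 0 ≤ w i) (hsum : Summable w) (D : ι → Set K)
    (x : C(K, E)) : Summable fun i ↦ w i * supNormOn (D i) x ^ 2 :=
  (hsum.mul_right (‖x‖ ^ 2)).of_nonneg_of_le (fun i ↦ mul_nonneg (hw i) (sq_nonneg _)) fun i ↦
    mul_le_mul_of_nonneg_left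
      (pow_le_pow_left₀ (supNormOn_nonneg _ x) (supNormOn_le_norm _ x) 2) (hw i)

lemma weightedSupNorm_mono (hw : ∀ i, 0 ≤ w i) (hsum : Summable w) (D : ι → Set K)
    (h : ∀ p, ‖x p‖ ≤ ‖y p‖) : weightedSupNorm w D x ≤ weightedSupNorm w D y :=
  Real.sqrt_le_sqrt <| (summable_mul_supNormOn_sq hw hsum D x).tsum_le_tsum
    (fun i ↦ mul_le_mul_of_nonneg_left
      (pow_le_pow_left₀ (supNormOn_nonneg _ x) (supNormOn_mono fun p _ ↦ h p) 2) (hw i))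
    (summable_mul_supNormOn_sq hw hsum D y)

lemma exists_finset_forall_mul_le_weightedSupNorm (hw : ∀ i, 0 ≤ w i) (hsum : Summable w)
    {D : ι → Set K} {r : ℝ} (hr : 0 ≤ r) (hrx : r < weightedSupNorm w D x) :
    ∃ t : Finset ι, ∀ k : ℝ, 0 ≤ k → ∀ z : C(K, E),
      (∀ i ∈ t, k * supNormOn (D i) x ≤ supNormOn (D i) z) → k * r ≤ weightedSupNorm w D z := by
  obtain ⟨t, ht⟩ : ∃ t : Finset ι, r ^ 2 < ∑ i ∈ t, w i * supNormOn (D i) x ^ 2 :=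
    ((summable_mul_supNormOn_sq hw hsum D x).hasSum.eventually_const_lt
      ((Real.lt_sqrt hr).1 hrx)).exists
  refine ⟨t, fun k hk z hz ↦ Real.le_sqrt_of_sq_le ?_⟩
  calc (k * r) ^ 2 = k ^ 2 * r ^ 2 := mul_pow k r 2
    _ ≤ k ^ 2 * ∑ i ∈ t, w i * supNormOn (D i) x ^ 2 := by gcongr
    _ = ∑ i ∈ t, w i * (k * supNormOn (D i) x) ^ 2 := by
      rw [Finset.mul_sum]
      exact Finset.sum_congr rfl fun i _ ↦ by ring
    _ ≤ ∑ i ∈ t, w i * supNormOn (D i) z ^ 2 := Finset.sum_le_sum fun i hi ↦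
      mul_le_mul_of_nonneg_left
        (pow_le_pow_left₀ (mul_nonneg hk (supNormOn_nonneg _ x)) (hz i hi) 2) (hw i)
    _ ≤ ∑' i, w i * supNormOn (D i) z ^ 2 :=
      (summable_mul_supNormOn_sq hw hsum D z).sum_le_tsum t
        fun i _ ↦ mul_nonneg (hw i) (sq_nonneg _)

end WeightedSupNorm

section SignFlip

variable [SeminormedAddCommGroup E] [NormedSpace ℝ E]

lemma exists_norm_le_eqOn_eqOn_neg [NormalSpace K] (x : C(K, E)) {P Q : Set K}
    (hP : IsClosed P) (hQ : IsClosed Q) (hPQ : Disjoint P Q) :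
    ∃ y : C(K, E), (∀ p, ‖y p‖ ≤ ‖x p‖) ∧ EqOn y x P ∧ EqOn y (-x) Q := by
  obtain ⟨f, hf0, hf1, hf⟩ := exists_continuous_zero_one_of_isClosed hP hQ hPQ
  refine ⟨⟨fun p ↦ (1 - 2 * f p) • x p, by fun_prop⟩, fun p ↦ ?_, fun p hp ↦ ?_, fun p hp ↦ ?_⟩
  · have hflip : |1 - 2 * f p| ≤ 1 := abs_le.2 ⟨by linarith [(hf p).2], by linarith [(hf p).1]⟩
    simpa [norm_smul] using mul_le_of_le_one_left (norm_nonneg (x p)) hflip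
  · simp [hf0 hp]
  · norm_num [hf1 hp]

variable [CompactSpace K] [T2Space K] [PerfectSpace K] {D : ι → Set K}

lemma exists_norm_le_forall_mul_supNormOn_le (hD : ∀ i, IsOpen (D i))
    (hne : ∀ i, (D i).Nonempty) (x : C(K, E)) {r : ℝ} (hr : r < 1) (t : Finset ι) :
    ∃ y : C(K, E), (∀ p, ‖y p‖ ≤ ‖x p‖) ∧ ∀ i ∈ t, ∀ a b : ℝ,
      (|a| + |b|) * (r * supNormOn (D i) x) ≤ supNormOn (D i) (a • x + b • y) := by
  obtain ⟨P, Q, hP, hQ, hPQ, hmeet⟩ := exists_finite_disjoint_inter_nonempty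
    fun i : t ↦ infinite_setOf_mul_supNormOn_le_norm (hD i) (hne i) x hr
  obtain ⟨y, hyx, hyP, hyQ⟩ := exists_norm_le_eqOn_eqOn_neg x hP.isClosed hQ.isClosed hPQ
  refine ⟨y, hyx, fun i hi a b ↦ ?_⟩
  have le_of_apply_eq {p : K} {c : ℝ} (hp : p ∈ D i ∧ r * supNormOn (D i) x ≤ ‖x p‖)
      (hpc : (a • x + b • y) p = c • x p) :
      |c| * (r * supNormOn (D i) x) ≤ supNormOn (D i) (a • x + b • y) :=
    calc |c| * (r * supNormOn (D i) x) ≤ |c| * ‖x p‖ := by gcongr; exact hp.2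
      _ = ‖(a • x + b • y) p‖ := by rw [hpc, norm_smul, Real.norm_eq_abs]
      _ ≤ supNormOn (D i) (a • x + b • y) := norm_le_supNormOn _ hp.1
  obtain ⟨⟨p, hp, hpP⟩, ⟨q, hq, hqQ⟩⟩ := hmeet ⟨i, hi⟩
  rcases abs_add_abs_eq_abs_add_or_abs_sub a b with hab | hab
  · exact hab ▸ le_of_apply_eq hp (by simp [hyP hpP, add_smul])
  · exact hab ▸ le_of_apply_eq hq (by simp [hyQ hqQ, sub_smul, ← sub_eq_add_neg])

variable {w : ι → ℝ}

lemma exists_norm_le_forall_mul_le_weightedSupNorm (hw : ∀ i, 0 ≤ w i) (hsum : Summable w)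
    (hD : ∀ i, IsOpen (D i)) (hne : ∀ i, (D i).Nonempty) {x : C(K, E)} {ρ : ℝ} (hρ : 0 ≤ ρ)
    (hρx : ρ < weightedSupNorm w D x) :
    ∃ y : C(K, E), (∀ p, ‖y p‖ ≤ ‖x p‖) ∧ ∀ a b : ℝ,
      (|a| + |b|) * ρ ≤ weightedSupNorm w D (a • x + b • y) := by
  obtain ⟨σ, hρσ, hσx⟩ := exists_between hρx
  have hσ : 0 < σ := hρ.trans_lt hρσ
  obtain ⟨t, ht⟩ := exists_finset_forall_mul_le_weightedSupNorm hw hsum hσ.le hσx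
  obtain ⟨y, hyx, hy⟩ :=
    exists_norm_le_forall_mul_supNormOn_le hD hne x ((div_lt_one hσ).2 hρσ) t
  refine ⟨y, hyx, fun a b ↦ ?_⟩
  calc (|a| + |b|) * ρ = (|a| + |b|) * (ρ / σ) * σ := by rw [mul_assoc, div_mul_cancel₀ ρ hσ.ne']
    _ ≤ weightedSupNorm w D (a • x + b • y) :=
      ht _ (by positivity) _ fun i hi ↦ (mul_assoc _ _ _).trans_le (hy i hi a b)

theorem normD_locally_octahedral_general (hw : ∀ i, 0 ≤ w i) (hsum : Summable w)
    (hD : ∀ i, IsOpen (D i)) (hne : ∀ i, (D i).Nonempty) {ε : ℝ} (hε : 0 < ε) {x : C(K, E)}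
    (hx : weightedSupNorm w D x = 1) :
    ∃ y : C(K, E), weightedSupNorm w D y = 1 ∧
      2 - ε < weightedSupNorm w D (x + y) ∧ 2 - ε < weightedSupNorm w D (x - y) := by
  obtain ⟨ρ, hρ, hρ1⟩ : ∃ ρ, max 0 (1 - ε / 2) < ρ ∧ ρ < 1 :=
    exists_between (max_lt one_pos (by linarith))
  obtain ⟨hρ0, hρε⟩ := max_lt_iff.1 hρ
  obtain ⟨y, hyx, hy⟩ :=
    exists_norm_le_forall_mul_le_weightedSupNorm hw hsum hD hne hρ0.le (hx ▸ hρ1)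
  have hy_le : weightedSupNorm w D y ≤ 1 := hx ▸ weightedSupNorm_mono hw hsum D hyx
  have hy_pos : 0 < weightedSupNorm w D y := hρ0.trans_le (by simpa using hy 0 1)
  set c := (weightedSupNorm w D y)⁻¹
  have hc : 1 ≤ c := (one_le_inv₀ hy_pos).2 hy_le
  have hc_abs : |c| = c := abs_of_pos (one_pos.trans_le hc)
  have hlower : 2 - ε < (1 + c) * ρ := by nlinarith
  refine ⟨c • y, ?_, hlower.trans_le ?_, hlower.trans_le ?_⟩
  · rw [weightedSupNorm_smul, hc_abs, inv_mul_cancel₀ hy_pos.ne']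
  · simpa [hc_abs] using hy 1 c
  · simpa [hc_abs, sub_eq_add_neg] using hy 1 (-c)

end SignFlip

/-- For any base `D` of nonempty open sets of `[0,1]`, the space `X_D = (C[0,1], ‖·‖_D)`
is locally octahedral. -/
theorem normD_locally_octahedral (D : ℕ → Set (Icc (0:ℝ) 1))
    (hDopen : ∀ n, IsOpen (D n)) (hDne : ∀ n, (D n).Nonempty)
    (hbasis : TopologicalSpace.IsTopologicalBasis (Set.range D)) :
    ∀ ε : ℝ, 0 < ε → ∀ x : C(Icc (0:ℝ) 1, ℝ), normD D x = 1 →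
      ∃ y : C(Icc (0:ℝ) 1, ℝ), normD D y = 1 ∧
        normD D (x + y) > 2 - ε ∧ normD D (x - y) > 2 - ε := by
  intro ε hε x hx
  exact normD_locally_octahedral_general (fun n ↦ by positivity)
    ((summable_nat_add_iff 1).2 summable_geometric_two) hDopen hDne hε hx
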